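/- Let X be a metric space, Ω ⊂ X open, and μ an Ahlfors s-regular measure on Ω for some s ∈ (0,∞). Let (ε_n) and (η_n) be sequences of positive reals with ε_n → 0, let W ∈ L¹_loc(Ω×Ω, μ×μ), W ≥ 0, and let ζ be a gauge satisfying the four admissibility conditions, with associated Carathéodory measure ψ. Assume Σ_{n=1}^∞ η_n ∫_Ω ε_n^{−s} ζ(B_{ε_n}(x)) [ ⨍_{B_{ε_n}(x)} χ_Ω(z) W(z,x) dμ(z) ] dμ(x) < ∞. Then the set A := { x ∈ Ω : limsup_{n→∞} η_n ⨍_{B_{ε_n/2}(x)} ⨍_{B_{ε_n/2}(x)} W(z,y) dμ(z) dμ(y) > 0 } satisfies ψ(A) = 0; in particular, for ψ-almost every x ∈ Ω, lim_{n→∞} η_n ⨍_{B_{ε_n/2}(x)} ⨍_{B_{ε_n/2}(x)} W(z,y) dμ(z) dμ(y) = 0. -/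

import Mathlib

open MeasureTheory Metric Filter Set
open scoped ENNReal Topology

/-- The approximating measure `φ_δ` of Carathéodory's construction from the gauge `ζ`
and the family of all Borel subsets. -/
noncomputable def caraPre {X : Type*} [MetricSpace X] [MeasurableSpace X]
    (ζ : Set X → ℝ≥0∞) (δ : ℝ) (A : Set X) : ℝ≥0∞ :=
  ⨅ (G : Set (Set X)) (_ : G.Countable) (_ : ∀ S ∈ G, MeasurableSet S)
    (_ : ∀ S ∈ G, EMetric.diam S ≤ ENNReal.ofReal δ) (_ : A ⊆ ⋃₀ G),
    ∑' S : G, ζ S.1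

/-- The resulting measure `ψ = sup_{δ>0} φ_δ` of Carathéodory's construction. -/
noncomputable def caraMeas {X : Type*} [MetricSpace X] [MeasurableSpace X]
    (ζ : Set X → ℝ≥0∞) (A : Set X) : ℝ≥0∞ :=
  ⨆ (δ : ℝ) (_ : 0 < δ), caraPre ζ δ A

/-- The double average `⨍_{B_ε(x)} ⨍_{B_ε(x)} W(z,y) dμ(z) dμ(y)`. -/
noncomputable def doubleAvg {X : Type*} [MetricSpace X] [MeasurableSpace X]
    (μ : Measure X) (W : X → X → ℝ≥0∞) (x : X) (ε : ℝ) : ℝ≥0∞ :=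
  (μ (closedBall x ε))⁻¹ * (μ (closedBall x ε))⁻¹ *
    ∫⁻ z in closedBall x ε, ∫⁻ y in closedBall x ε, W z y ∂μ ∂μ

theorem caraPre_le_of_cover {X : Type*} [MetricSpace X] [MeasurableSpace X]
    (ζ : Set X → ℝ≥0∞) (δ : ℝ) (A : Set X) {ι : Type*} [Countable ι] (f : ι → Set X)
    (hm : ∀ i, MeasurableSet (f i)) (hd : ∀ i, EMetric.diam (f i) ≤ ENNReal.ofReal δ)
    (hA : A ⊆ ⋃ i, f i) : caraPre ζ δ A ≤ ∑' i, ζ (f i) := by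
  unfold caraPre
  refine (iInf_le_of_le (range f) (iInf_le_of_le (countable_range f) (iInf_le_of_le ?_
    (iInf_le_of_le ?_ (iInf_le_of_le ?_ ?_)))))
  · rintro _ ⟨i, rfl⟩; exact hm i
  · rintro _ ⟨i, rfl⟩; exact hd i
  · rwa [sUnion_range]
  · calc ∑' S : range f, ζ S.1 = ∑' S : range f, ζ (f (rangeSplitting f S)) := by
          exact tsum_congr fun S => by rw [apply_rangeSplitting f S]
      _ ≤ ∑' i, ζ (f i) :=
          ENNReal.tsum_comp_le_tsum_of_injective (rangeSplitting_injective f) (fun i => ζ (f i))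

theorem caraPre_mono {X : Type*} [MetricSpace X] [MeasurableSpace X]
    (ζ : Set X → ℝ≥0∞) (δ : ℝ) {A B : Set X} (h : A ⊆ B) :
    caraPre ζ δ A ≤ caraPre ζ δ B := by
  unfold caraPre
  refine le_iInf fun G => le_iInf fun h1 => le_iInf fun h2 => le_iInf fun h3 => le_iInf fun h4 => ?_
  exact iInf_le_of_le G (iInf_le_of_le h1 (iInf_le_of_le h2 (iInf_le_of_le h3
    (iInf_le_of_le (h.trans h4) le_rfl))))

theorem caraPre_exists {X : Type*} [MetricSpace X] [MeasurableSpace X]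
    (ζ : Set X → ℝ≥0∞) (δ : ℝ) {A : Set X} {a : ℝ≥0∞} (h : caraPre ζ δ A < a) :
    ∃ G : Set (Set X), G.Countable ∧ (∀ S ∈ G, MeasurableSet S) ∧
    (∀ S ∈ G, EMetric.diam S ≤ ENNReal.ofReal δ) ∧ A ⊆ ⋃₀ G ∧ ∑' S : G, ζ S.1 < a := by
  unfold caraPre at h
  simp only [iInf_lt_iff] at h
  obtain ⟨G, h1, h2, h3, h4, h5⟩ := h
  exact ⟨G, h1, h2, h3, h4, h5⟩

theorem caraPre_iUnion_le {X : Type*} [MetricSpace X] [MeasurableSpace X]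
    (ζ : Set X → ℝ≥0∞) (δ : ℝ) (A : ℕ → Set X) :
    caraPre ζ δ (⋃ n, A n) ≤ ∑' n, caraPre ζ δ (A n) := by
  refine ENNReal.le_of_forall_pos_le_add fun e he hfin => ?_
  obtain ⟨e', he', hsum⟩ := ENNReal.exists_pos_sum_of_countable
    (ENNReal.coe_pos.2 he).ne' ℕ
  have : ∀ n, caraPre ζ δ (A n) < caraPre ζ δ (A n) + e' n := fun n =>
    ENNReal.lt_add_right (ENNReal.ne_top_of_tsum_ne_top hfin.ne n) (by simpa using (he' n).ne')
  choose G h1 h2 h3 h4 h5 using fun n => caraPre_exists ζ δ (this n)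
  haveI : ∀ n, Countable (G n) := fun n => (h1 n).to_subtype
  calc caraPre ζ δ (⋃ n, A n) ≤ ∑' p : (Σ n, G n), ζ p.2.1 := by
        refine caraPre_le_of_cover ζ δ _ (fun p : (Σ n, G n) => p.2.1)
          (fun p => h2 _ _ p.2.2) (fun p => h3 _ _ p.2.2) ?_
        refine iUnion_subset fun n x hx => ?_
        obtain ⟨S, hS, hxS⟩ := h4 n hx
        exact mem_iUnion.2 ⟨⟨n, S, hS⟩, hxS⟩
    _ = ∑' n, ∑' S : G n, ζ S.1 := ENNReal.tsum_sigma' _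
    _ ≤ ∑' n, (caraPre ζ δ (A n) + e' n) := ENNReal.tsum_le_tsum fun n => (h5 n).le
    _ = ∑' n, caraPre ζ δ (A n) + ∑' n, (e' n : ℝ≥0∞) := ENNReal.tsum_add
    _ ≤ _ := by gcongr

/-- Packing: disjoint balls with lower bound on integrals give a cover bound. -/
theorem caraPre_packing {X : Type*} [MetricSpace X] [MeasurableSpace X] [BorelSpace X]
    (Ω : Set X) (μ : Measure X) (ζ : Set X → ℝ≥0∞) (δ ε : ℝ) (hε : 0 < ε)
    (hδ : 2 * ε ≤ δ) (S : Set X) (F : X → ℝ≥0∞) (L : ℝ≥0∞) (hL : L ≠ ⊤)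
    (hF : ∫⁻ x in Ω, F x ∂μ ≠ ⊤)
    (hSΩ : ∀ x ∈ S, closedBall x (ε / 2) ⊆ Ω)
    (hpos : ∀ x ∈ S, ζ (closedBall x ε) ≠ 0)
    (hle : ∀ x ∈ S, ζ (closedBall x ε) ≤ L * ∫⁻ y in closedBall x (ε / 2), F y ∂μ) :
    caraPre ζ δ S ≤ L * ∫⁻ x in Ω, F x ∂μ := by
  obtain ⟨u, huS, hdisj, hcov⟩ := Vitali.exists_disjoint_subfamily_covering_enlargement
    (fun x : X => closedBall x (ε / 2)) S (fun _ => (1 : ℝ)) 2 (by norm_num)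
    (fun _ _ => zero_le_one) 1 (fun _ _ => le_rfl)
    (fun x _ => ⟨x, mem_closedBall_self (by positivity)⟩)
  have hsumt : ∑' x : u, ∫⁻ y in closedBall x.1 (ε / 2), F y ∂μ ≤ ∫⁻ x in Ω, F x ∂μ := by
    refine ENNReal.summable.tsum_le_of_sum_le fun t => ?_
    rw [← lintegral_biUnion_finset _ (fun x _ => measurableSet_closedBall)]
    · refine lintegral_mono_set (iUnion₂_subset fun x _ => hSΩ _ (huS x.2))
    · intro x _ y _ hxy
      exact hdisj x.2 y.2 (fun h => hxy (Subtype.ext h))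
  have hsumz : ∑' x : u, ζ (closedBall x.1 ε) ≤ L * ∫⁻ x in Ω, F x ∂μ := by
    calc _ ≤ ∑' x : u, L * ∫⁻ y in closedBall x.1 (ε / 2), F y ∂μ :=
          ENNReal.tsum_le_tsum fun x => hle _ (huS x.2)
      _ ≤ _ := by rw [ENNReal.tsum_mul_left]; gcongr
  haveI : Countable u := by
    have h := Summable.countable_support_ennreal
      (ne_top_of_le_ne_top (ENNReal.mul_ne_top hL hF) hsumz)
    have h2 : Function.support (fun x : u => ζ (closedBall x.1 ε)) = univ := by
      ext x; simpa using hpos _ (huS x.2)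
    rw [h2] at h
    exact countable_univ_iff.1 h
  refine (caraPre_le_of_cover ζ δ S (fun x : u => closedBall x.1 ε)
    (fun _ => measurableSet_closedBall) (fun x => ?_) ?_).trans hsumz
  · refine EMetric.diam_le fun y hy z hz => ?_
    rw [edist_dist]
    refine ENNReal.ofReal_le_ofReal ?_
    have h1 := mem_closedBall.1 hy
    have h2 := mem_closedBall'.1 hz
    linarith [dist_triangle y x.1 z]
  · intro x hx
    obtain ⟨b, hb, ⟨y, hy1, hy2⟩, -⟩ := hcov x hx
    refine mem_iUnion.2 ⟨⟨b, hb⟩, ?_⟩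
    have h1 := mem_closedBall'.1 hy1
    have h2 := mem_closedBall.1 hy2
    rw [mem_closedBall]
    linarith [dist_triangle x y b]

theorem ahlfors_inv {X : Type*} [MetricSpace X] [MeasurableSpace X] [BorelSpace X]
    (Ω : Set X) (hΩ : IsOpen Ω) (μ : Measure X) (s : ℝ) (hs : 0 < s)
    (hAhl : ∃ c C : ℝ, 0 < c ∧ 0 < C ∧ ∀ x ∈ Ω, ∀ ρ : ℝ, 0 < ρ →
      ENNReal.ofReal ρ < EMetric.diam Ω →
      ENNReal.ofReal (c * ρ ^ s) ≤ μ (closedBall x ρ) ∧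
        μ (closedBall x ρ) ≤ ENNReal.ofReal (C * ρ ^ s)) :
    ∃ (K r : ℝ≥0∞), K ≠ ⊤ ∧ 0 < r ∧ ∀ ε : ℝ, 0 < ε → ENNReal.ofReal ε < r →
      ∀ x ∈ Ω, ∀ y ∈ Ω, 
      (μ (closedBall x (ε / 2)))⁻¹ * (μ (closedBall x (ε / 2)))⁻¹ ≤
        K * ((ENNReal.ofReal ε ^ s)⁻¹ * (μ (closedBall y ε))⁻¹) := by
  obtain ⟨c, C, hc, hC, hA⟩ := hAhl
  rcases eq_or_ne (EMetric.diam Ω) 0 with h0 | h0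
  · have hsub := EMetric.diam_eq_zero_iff.1 h0
    rcases Ω.eq_empty_or_nonempty with he | ⟨x0, hx0⟩
    · exact ⟨0, 1, by simp, by simp, fun ε _ _ x hx => by simp [he] at hx⟩
    obtain ⟨r0, hr0, hball⟩ := Metric.isOpen_iff.1 hΩ x0 hx0
    have hsing : ∀ ρ : ℝ, 0 < ρ → ρ < r0 → closedBall x0 ρ = {x0} := fun ρ h1 h2 => by
      refine subset_antisymm (fun y hy => ?_) (by simpa using h1.le)
      exact hsub (hball (closedBall_subset_ball h2 hy)) hx0
    refine ⟨if μ {x0} = 0 then 1 else (μ {x0})⁻¹, min (ENNReal.ofReal r0) 1, ?_, by simpa using hr0,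
      fun ε hε hεr x hx y hy => ?_⟩
    · split_ifs with h
      · simp
      · simpa using h
    obtain rfl := hsub hx hx0
    obtain rfl := hsub hy hx
    rw [lt_min_iff] at hεr
    have h1 : ε < r0 := (ENNReal.ofReal_lt_ofReal_iff hr0).1 hεr.1
    rw [hsing ε hε h1, hsing (ε / 2) (by positivity) (by linarith)]
    have hle : ENNReal.ofReal ε ^ s ≤ 1 := ENNReal.rpow_le_one hεr.2.le hs.le
    have hinv : 1 ≤ (ENNReal.ofReal ε ^ s)⁻¹ := ENNReal.one_le_inv.2 hle
    split_ifs with h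
    · rw [h, ENNReal.inv_zero, ENNReal.mul_top (by simp), one_mul, ENNReal.mul_top]
      exact (zero_lt_one.trans_le hinv).ne'
    · gcongr
      exact le_mul_of_one_le_left zero_le hinv
  · refine ⟨ENNReal.ofReal (C * 4 ^ s / c ^ 2), EMetric.diam Ω, by simp, pos_iff_ne_zero.2 h0,
      fun ε hε hεr x hx y hy => ?_⟩
    have hx1 := (hA x hx (ε / 2) (by positivity)
      ((ENNReal.ofReal_le_ofReal (by linarith)).trans_lt hεr)).1
    have hy1 := (hA y hy ε hε hεr).2
    have hcp : 0 < c * (ε / 2) ^ s := by positivity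
    have hCp : 0 < C * ε ^ s := by positivity
    calc _ ≤ (ENNReal.ofReal (c * (ε / 2) ^ s))⁻¹ * (ENNReal.ofReal (c * (ε / 2) ^ s))⁻¹ := by
          gcongr
      _ = ENNReal.ofReal (C * 4 ^ s / c ^ 2) *
          ((ENNReal.ofReal ε ^ s)⁻¹ * (ENNReal.ofReal (C * ε ^ s))⁻¹) := by
          rw [ENNReal.ofReal_rpow_of_pos hε, ← ENNReal.ofReal_inv_of_pos hcp,
            ← ENNReal.ofReal_inv_of_pos hCp, ← ENNReal.ofReal_inv_of_pos (by positivity),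
            ← ENNReal.ofReal_mul (by positivity), ← ENNReal.ofReal_mul (by positivity),
            ← ENNReal.ofReal_mul (by positivity)]
          congr 1
          rw [Real.div_rpow hε.le (by norm_num), show (4 : ℝ) = 2 * 2 by norm_num,
            Real.mul_rpow (by norm_num) (by norm_num)]
          have : 0 < (2 : ℝ) ^ s := by positivity
          have : 0 < ε ^ s := by positivity
          field_simp
      _ ≤ _ := by gcongr

/-- Part 3 of the abstract fine-property theorem: if the series of weighted
`ζ`-energies converges, then the set `A` where the limsup of the weighted double
averages at half scale is positive is `ψ`-null; in particular, the set of points of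
`Ω` where these quantities do not tend to `0` is `ψ`-null. -/
theorem statement11 {X : Type*} [MetricSpace X] [MeasurableSpace X] [BorelSpace X]
    (Ω : Set X) (hΩ : IsOpen Ω) (μ : Measure X) (s : ℝ) (hs : 0 < s)
    (hAhl : ∃ c C : ℝ, 0 < c ∧ 0 < C ∧ ∀ x ∈ Ω, ∀ ρ : ℝ, 0 < ρ →
      ENNReal.ofReal ρ < EMetric.diam Ω →
      ENNReal.ofReal (c * ρ ^ s) ≤ μ (closedBall x ρ) ∧
        μ (closedBall x ρ) ≤ ENNReal.ofReal (C * ρ ^ s))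
    (ε η : ℕ → ℝ) (hε : ∀ n, 0 < ε n) (hη : ∀ n, 0 < η n)
    (hεlim : Tendsto ε atTop (𝓝 0))
    (W : X → X → ℝ≥0∞) (hWmeas : Measurable (fun p : X × X => W p.1 p.2))
    (hWloc : ∀ x ∈ Ω, ∀ R : ℝ, 0 < R →
      ∫⁻ z in closedBall x R ∩ Ω, ∫⁻ y in closedBall x R ∩ Ω, W z y ∂μ ∂μ < ⊤)
    (ζ : Set X → ℝ≥0∞)
    (I γ γ' lam lam' : ℝ≥0∞) (hI : 0 < I) (hγ : 0 < γ) (hγ' : 0 < γ')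
    (hlam : 0 < lam) (hlamtop : lam ≠ ⊤) (hlam' : 0 < lam') (hlam'top : lam' ≠ ⊤)
    (hζfin : ∀ (x : X) (R : ℝ), 0 < R → ENNReal.ofReal R < I →
      0 < ζ (closedBall x R) ∧ ζ (closedBall x R) < ⊤)
    (hζdbl : ∀ (x : X) (R : ℝ), 0 < R → ENNReal.ofReal R < γ →
      ζ (closedBall x (5 * R)) ≤ lam * ζ (closedBall x R))
    (hζcomp : ∀ (x y : X) (R : ℝ), 0 < R → ENNReal.ofReal R < γ' →
      y ∈ closedBall x (R / 2) → ζ (closedBall x R) ≤ lam' * ζ (closedBall y R))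
    (hζmeas : ∀ R : ℝ, 0 < R → AEMeasurable (fun x : X => ζ (closedBall x R)) μ)
    (hsum : ∑' n, ENNReal.ofReal (η n) *
            ∫⁻ x in Ω, (ENNReal.ofReal (ε n) ^ s)⁻¹ * ζ (closedBall x (ε n)) *
              ((μ (closedBall x (ε n)))⁻¹ *
                ∫⁻ z in closedBall x (ε n) ∩ Ω, W z x ∂μ) ∂μ < ⊤) :
    caraMeas ζ {x ∈ Ω | 0 < limsup (fun n =>
        ENNReal.ofReal (η n) * doubleAvg μ W x (ε n / 2)) atTop} = 0 ∧
    caraMeas ζ {x ∈ Ω | ¬ Tendsto (fun n =>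
        ENNReal.ofReal (η n) * doubleAvg μ W x (ε n / 2)) atTop (𝓝 0)} = 0 := by
  classical
  obtain ⟨K, r, hK, hr, hKr⟩ := ahlfors_inv Ω hΩ μ s hs hAhl
  set F : ℕ → X → ℝ≥0∞ := fun n x => (ENNReal.ofReal (ε n) ^ s)⁻¹ * ζ (closedBall x (ε n)) *
              ((μ (closedBall x (ε n)))⁻¹ *
                ∫⁻ z in closedBall x (ε n) ∩ Ω, W z x ∂μ) with hFdef
  set a : ℕ → ℝ≥0∞ := fun n => ENNReal.ofReal (η n) * ∫⁻ x in Ω, F n x ∂μ with ha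
  have hsum' : ∑' n, a n ≠ ⊤ := hsum.ne
  have hFfin : ∀ n, ∫⁻ x in Ω, F n x ∂μ ≠ ⊤ := by
    intro n h
    have := ENNReal.ne_top_of_tsum_ne_top hsum' n
    simp only [ha, h] at this
    exact this (ENNReal.mul_top (by simpa using hη n))
  -- the bad sets
  set S : ℕ → ℕ → Set X := fun k n => {x | x ∈ Ω ∧ closedBall x (ε n / 2) ⊆ Ω ∧
    ((k : ℝ≥0∞) + 1)⁻¹ ≤ ENNReal.ofReal (η n) * doubleAvg μ W x (ε n / 2)} with hS
  have key : ∀ k n δ, ENNReal.ofReal (ε n) < r → ENNReal.ofReal (ε n) < I →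
      ENNReal.ofReal (ε n) < γ' → 2 * ε n ≤ δ →
      caraPre ζ δ (S k n) ≤ ((k : ℝ≥0∞) + 1) * (lam' * K) * a n := by
    intro k n δ h1 h2 h3 h4
    have hk0 : ((k : ℝ≥0∞) + 1) ≠ 0 := by positivity
    have hkt : ((k : ℝ≥0∞) + 1) ≠ ⊤ := by simp
    have hlK : lam' * K ≠ ⊤ := ENNReal.mul_ne_top hlam'top hK
    have hLt : ((k : ℝ≥0∞) + 1) * (lam' * K) * ENNReal.ofReal (η n) ≠ ⊤ :=
      ENNReal.mul_ne_top (ENNReal.mul_ne_top hkt hlK) (by simp)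
    have := caraPre_packing Ω μ ζ δ (ε n) (hε n) h4 (S k n) (F n) _ hLt (hFfin n)
      (fun x hx => hx.2.1) (fun x _ => (hζfin x _ (hε n) h2).1.ne') ?_
    · refine this.trans (le_of_eq ?_)
      simp only [ha]; ring
    rintro x ⟨hxΩ, hxB, hx⟩
    have hdpos : doubleAvg μ W x (ε n / 2) ≠ 0 := by
      intro h
      rw [h, mul_zero, nonpos_iff_eq_zero, ENNReal.inv_eq_zero] at hx
      exact hkt hx
    have hM : μ (closedBall x (ε n / 2)) ≠ ⊤ := by
      intro h
      apply hdpos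
      simp [doubleAvg, h]
    haveI : IsFiniteMeasure (μ.restrict (closedBall x (ε n / 2))) :=
      ⟨by simpa using hM.lt_top⟩
    have hswap : ∫⁻ z in closedBall x (ε n / 2), ∫⁻ y in closedBall x (ε n / 2), W z y ∂μ ∂μ
        = ∫⁻ y in closedBall x (ε n / 2), ∫⁻ z in closedBall x (ε n / 2), W z y ∂μ ∂μ :=
      lintegral_lintegral_swap hWmeas.aemeasurable
    have hmain : ζ (closedBall x (ε n)) * doubleAvg μ W x (ε n / 2) ≤
        (lam' * K) * ∫⁻ y in closedBall x (ε n / 2), F n y ∂μ := by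
      unfold doubleAvg
      rw [hswap, ← mul_assoc, ← lintegral_const_mul' _ _ hlK]
      refine (lintegral_const_mul_le _ _).trans ?_
      refine setLIntegral_mono' measurableSet_closedBall fun y hy => ?_
      have hz := hζcomp x y (ε n) (hε n) h3 hy
      have hq := hKr (ε n) (hε n) h1 x hxΩ y (hxB hy)
      have hint : ∫⁻ z in closedBall x (ε n / 2), W z y ∂μ ≤
          ∫⁻ z in closedBall y (ε n) ∩ Ω, W z y ∂μ := by
        refine lintegral_mono_set (subset_inter (fun z hz => ?_) hxB)
        have h5 := mem_closedBall.1 hz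
        have h6 := mem_closedBall'.1 hy
        rw [mem_closedBall]
        linarith [dist_triangle z x y]
      calc _ ≤ (lam' * ζ (closedBall y (ε n))) *
            (K * ((ENNReal.ofReal (ε n) ^ s)⁻¹ * (μ (closedBall y (ε n)))⁻¹)) *
            ∫⁻ z in closedBall y (ε n) ∩ Ω, W z y ∂μ := by gcongr
        _ = _ := by simp only [hFdef]; ring
    have hone : 1 ≤ ((k : ℝ≥0∞) + 1) * (ENNReal.ofReal (η n) * doubleAvg μ W x (ε n / 2)) := by
      calc (1 : ℝ≥0∞) = ((k : ℝ≥0∞) + 1) * ((k : ℝ≥0∞) + 1)⁻¹ :=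
            (ENNReal.mul_inv_cancel hk0 hkt).symm
        _ ≤ _ := by gcongr
    calc ζ (closedBall x (ε n)) = ζ (closedBall x (ε n)) * 1 := (mul_one _).symm
      _ ≤ ζ (closedBall x (ε n)) *
          (((k : ℝ≥0∞) + 1) * (ENNReal.ofReal (η n) * doubleAvg μ W x (ε n / 2))) := by gcongr
      _ = ((k : ℝ≥0∞) + 1) * ENNReal.ofReal (η n) *
          (ζ (closedBall x (ε n)) * doubleAvg μ W x (ε n / 2)) := by ring
      _ ≤ ((k : ℝ≥0∞) + 1) * ENNReal.ofReal (η n) *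
          ((lam' * K) * ∫⁻ y in closedBall x (ε n / 2), F n y ∂μ) := by gcongr
      _ = _ := by ring
  have hεE : Tendsto (fun n => ENNReal.ofReal (ε n)) atTop (𝓝 0) := by
    simpa using ENNReal.tendsto_ofReal hεlim
  -- the sets of points which are bad infinitely often
  have hlim : ∀ k δ, 0 < δ → caraPre ζ δ {x | ∃ᶠ n in atTop, x ∈ S k n} = 0 := by
    intro k δ hδ
    have hev : ∀ᶠ n in atTop, ENNReal.ofReal (ε n) < r ∧ ENNReal.ofReal (ε n) < I ∧
        ENNReal.ofReal (ε n) < γ' ∧ 2 * ε n ≤ δ := by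
      filter_upwards [hεE.eventually_lt_const hr, hεE.eventually_lt_const hI,
        hεE.eventually_lt_const hγ', hεlim.eventually_lt_const (half_pos hδ)] with n h1 h2 h3 h4
      exact ⟨h1, h2, h3, by linarith⟩
    have htail : Tendsto (fun N => ((k : ℝ≥0∞) + 1) * (lam' * K) * ∑' n, a (n + N)) atTop (𝓝 0) := by
      have := ENNReal.Tendsto.const_mul (a := ((k : ℝ≥0∞) + 1) * (lam' * K))
        (ENNReal.tendsto_sum_nat_add a hsum')
        (Or.inr (ENNReal.mul_ne_top (by simp) (ENNReal.mul_ne_top hlam'top hK)))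
      simpa using this
    refine le_antisymm (ge_of_tendsto htail ?_) zero_le
    obtain ⟨N0, hN0⟩ := eventually_atTop.1 hev
    filter_upwards [eventually_ge_atTop N0] with N hN
    calc _ ≤ caraPre ζ δ (⋃ n, S k (n + N)) := by
          refine caraPre_mono ζ δ fun x hx => ?_
          obtain ⟨m, hm, hxm⟩ := (frequently_atTop.1 hx) N
          refine mem_iUnion.2 ⟨m - N, ?_⟩
          rwa [Nat.sub_add_cancel hm]
      _ ≤ ∑' n, caraPre ζ δ (S k (n + N)) := caraPre_iUnion_le _ _ _
      _ ≤ ∑' n, ((k : ℝ≥0∞) + 1) * (lam' * K) * a (n + N) := by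
          refine ENNReal.tsum_le_tsum fun n => ?_
          obtain ⟨h1, h2, h3, h4⟩ := hN0 (n + N) (by omega)
          exact key k _ δ h1 h2 h3 h4
      _ = _ := ENNReal.tsum_mul_left
  have hcov : {x ∈ Ω | ¬ Tendsto (fun n =>
        ENNReal.ofReal (η n) * doubleAvg μ W x (ε n / 2)) atTop (𝓝 0)} ⊆
      ⋃ k, {x | ∃ᶠ n in atTop, x ∈ S k n} := by
    rintro x ⟨hxΩ, hx⟩
    rw [ENNReal.tendsto_nhds_zero] at hx
    push Not at hx
    obtain ⟨e, he, hfr⟩ := hx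
    obtain ⟨k, hk⟩ := ENNReal.exists_inv_nat_lt he.ne'
    refine mem_iUnion.2 ⟨k, ?_⟩
    obtain ⟨r0, hr0, hball⟩ := Metric.isOpen_iff.1 hΩ x hxΩ
    have hev := hεlim.eventually_lt_const hr0
    refine (hfr.and_eventually hev).mono fun n hn => ⟨hxΩ, ?_, ?_⟩
    · exact (closedBall_subset_ball (by linarith [hn.2, hε n])).trans hball
    · refine le_trans (le_trans ?_ hk.le) hn.1.le
      gcongr
      exact le_self_add
  have hfinal : ∀ T : Set X, T ⊆ {x ∈ Ω | ¬ Tendsto (fun n =>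
        ENNReal.ofReal (η n) * doubleAvg μ W x (ε n / 2)) atTop (𝓝 0)} → caraMeas ζ T = 0 := by
    intro T hT
    unfold caraMeas
    refine le_antisymm (iSup₂_le fun δ hδ => ?_) zero_le
    calc _ ≤ _ := caraPre_mono ζ δ (hT.trans hcov)
      _ ≤ _ := caraPre_iUnion_le _ _ _
      _ = 0 := by simp [hlim _ δ hδ]
  refine ⟨hfinal _ ?_, hfinal _ subset_rfl⟩
  rintro x ⟨hxΩ, hx⟩
  refine ⟨hxΩ, fun h => ?_⟩
  rw [h.limsup_eq] at hx
  exact lt_irrefl _ hx
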